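/- Let M₀ = [[A,B],[B*,D]] be a top-dominant block operator matrix satisfying conditions (i)–(iii), with self-adjoint closure M, d = max Spec(D), λ_e = inf(Spec_ess(M) ∩ (d,∞)), and Schur complement S(μ). Let μ ∈ (d, λ_e) and 0 < ε < μ − d. If [−ε, 0] ∩ Spec(S(μ)) ≠ ∅, then [μ−ε, μ] ∩ Spec(M) ≠ ∅. -/

import Mathlib

/-!
Let `m` and `h` be the midpoint and half-length of `[μ - ε, μ]`. If `M` has no spectrum there, then
`‖v‖ ≤ C ‖(M - m) v‖` on `Dom M` for some `C` with `C h < 1`. Each `x ∈ Dom S(μ)` is the first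
component of the vector `v = (x, -(D - μ)⁻¹ B* x)`, for which `(M - μ) v = (S(μ) x, 0)`.
Since `⟪(S(μ) x, 0), v⟫ = ⟪S(μ) x, x⟫`, expanding squares gives
`‖(S(μ) - (m - μ)) x‖² - (m - μ)² ‖x‖² = ‖(M - m) v‖² - (m - μ)² ‖v‖²`. As `|m - μ| ≤ h` and
`‖x‖ ≤ ‖v‖`, the estimate for `M - m` passes to `S(μ) - (m - μ)` with the same `C`, so `S(μ)` has no
spectrum within distance `h` of `m - μ`.
-/

open Filter Topology
open scoped ComplexInnerProductSpace

/-- A (possibly unbounded, densely defined) linear operator from `E` to `F`,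
encoded by its domain together with a total function that is linear on the domain. -/
structure PMap (E F : Type*) [NormedAddCommGroup E] [InnerProductSpace ℂ E]
    [NormedAddCommGroup F] [InnerProductSpace ℂ F] : Type _ where
  dom : Submodule ℂ E
  toFun : E → F
  map_add' : ∀ x ∈ dom, ∀ y ∈ dom, toFun (x + y) = toFun x + toFun y
  map_smul' : ∀ (c : ℂ), ∀ x ∈ dom, toFun (c • x) = c • toFun x

namespace PMap

variable {E F : Type*} [NormedAddCommGroup E] [InnerProductSpace ℂ E]
  [NormedAddCommGroup F] [InnerProductSpace ℂ F]

/-- `T` is self-adjoint : it is densely defined and the adjoint relation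
`⟪T x, y⟫ = ⟪x, z⟫` (for all `x` in the domain) holds iff `y` is in the domain
and `z = T y`. -/
def IsSelfAdjoint (T : PMap E E) : Prop :=
  Dense (T.dom : Set E) ∧
    ∀ y z : E, (∀ x ∈ T.dom, ⟪T.toFun x, y⟫ = ⟪x, z⟫) ↔ y ∈ T.dom ∧ z = T.toFun y

/-- The resolvent set : points `z` where `T - z` has an everywhere defined bounded inverse. -/
def resolventSet (T : PMap E E) : Set ℂ :=
  {z | ∃ R : E →L[ℂ] E, (∀ x ∈ T.dom, R (T.toFun x - z • x) = x) ∧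
      ∀ y : E, R y ∈ T.dom ∧ T.toFun (R y) - z • R y = y}

/-- The spectrum of `T`. -/
def spec (T : PMap E E) : Set ℂ := {z | z ∉ T.resolventSet}

/-- The real points of the spectrum of `T`. -/
def specR (T : PMap E E) : Set ℝ := {t : ℝ | (t : ℂ) ∈ T.spec}

/-- The (real) essential spectrum of `T`, via singular Weyl sequences. -/
def specEssR (T : PMap E E) : Set ℝ :=
  {t : ℝ | ∃ f : ℕ → E, (∀ n, f n ∈ T.dom) ∧ (∀ n, ‖f n‖ = 1) ∧
      (∀ y : E, Tendsto (fun n => ⟪y, f n⟫) atTop (𝓝 0)) ∧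
      Tendsto (fun n => ‖T.toFun (f n) - (t : ℂ) • f n‖) atTop (𝓝 0)}

/-- The eigenspace `ker (T - t)`. -/
def eigSp (T : PMap E E) (t : ℝ) : Submodule ℂ E where
  carrier := {x | x ∈ T.dom ∧ T.toFun x = (t : ℂ) • x}
  add_mem' := by
    rintro a b ⟨ha1, ha2⟩ ⟨hb1, hb2⟩
    exact ⟨T.dom.add_mem ha1 hb1, by rw [T.map_add' a ha1 b hb1, ha2, hb2, smul_add]⟩
  zero_mem' := by
    refine ⟨T.dom.zero_mem, ?_⟩
    have h := T.map_smul' 0 0 T.dom.zero_mem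
    simpa using h
  smul_mem' := by
    rintro c x ⟨hx1, hx2⟩
    refine ⟨T.dom.smul_mem c hx1, ?_⟩
    rw [T.map_smul' c x hx1, hx2]
    exact smul_comm c ((t : ℂ)) x

/-- The distance from `u` to the set `L` in the graph norm of `T`. -/
noncomputable def gdist (T : PMap E E) (u : E) (L : Set E) : ℝ :=
  sInf {r | ∃ v ∈ L, r = Real.sqrt (‖u - v‖ ^ 2 + ‖T.toFun u - T.toFun v‖ ^ 2)}

end PMap

/-- The Schur form `s(μ)[x,y] = 𝔞[x,y] − μ⟨x,y⟩ − ⟨(D−μ)⁻¹ B*x, B*y⟩`, where `fa` is the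
closed form of `A`, `Bs = B*`, and `RD μ = (D−μ)⁻¹` is the resolvent of `D`. -/
noncomputable def schurForm {H1 H2 : Type*} [NormedAddCommGroup H1] [InnerProductSpace ℂ H1]
    [NormedAddCommGroup H2] [InnerProductSpace ℂ H2]
    (fa : H1 → H1 → ℂ) (Bs : PMap H1 H2) (RD : ℂ → (H2 →L[ℂ] H2)) (μ : ℂ) (x y : H1) : ℂ :=
  fa x y - μ * ⟪x, y⟫ - ⟪RD μ (Bs.toFun x), Bs.toFun y⟫

section LinearIsometry

variable {H E : Type*} [NormedAddCommGroup H] [InnerProductSpace ℂ H]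
  [NormedAddCommGroup E] [InnerProductSpace ℂ E] {J : H →ₗᵢ[ℂ] E}

theorem norm_le_of_inner_map_eq {x : H} {v : E} (hv : ∀ u, ⟪J u, v⟫ = ⟪u, x⟫) : ‖x‖ ≤ ‖v‖ := by
  have hsq : ‖x‖ * ‖x‖ ≤ ‖x‖ * ‖v‖ :=
    calc ‖x‖ * ‖x‖ = ‖⟪J x, v⟫‖ := by rw [hv, ← sq, inner_self_eq_norm_sq_to_K]; simp
      _ ≤ ‖x‖ * ‖v‖ := by simpa only [J.norm_map] using norm_inner_le_norm (J x) v
  obtain hx | hx := (norm_nonneg x).eq_or_lt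
  · exact hx ▸ norm_nonneg v
  · exact le_of_mul_le_mul_left hsq hx

theorem norm_map_add_smul_sq {w x : H} {v : E} (hv : ∀ u, ⟪J u, v⟫ = ⟪u, x⟫) (r : ℝ) :
    ‖J w + (r : ℂ) • v‖ ^ 2 = ‖w + (r : ℂ) • x‖ ^ 2 + r ^ 2 * (‖v‖ ^ 2 - ‖x‖ ^ 2) := by
  rw [norm_add_sq (𝕜 := ℂ), norm_add_sq (𝕜 := ℂ), inner_smul_right, inner_smul_right, hv,
    J.norm_map, norm_smul, norm_smul, Complex.norm_real, mul_pow, mul_pow, Real.norm_eq_abs, sq_abs]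
  ring

/-- The isometric embedding `x ↦ (x, 0)` of the first summand of a Hilbert sum. -/
noncomputable def hilbertSumInl (H1 H2 : Type*) [NormedAddCommGroup H1] [InnerProductSpace ℂ H1]
    [NormedAddCommGroup H2] [InnerProductSpace ℂ H2] : H1 →ₗᵢ[ℂ] WithLp 2 (H1 × H2) where
  toLinearMap := (WithLp.linearEquiv 2 ℂ (H1 × H2)).symm.toLinearMap ∘ₗ LinearMap.inl ℂ H1 H2
  norm_map' := WithLp.norm_toLp_fst 2 H1 H2

theorem hilbertSumInl_apply {H1 H2 : Type*} [NormedAddCommGroup H1] [InnerProductSpace ℂ H1]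
    [NormedAddCommGroup H2] [InnerProductSpace ℂ H2] (x : H1) :
    hilbertSumInl H1 H2 x = WithLp.toLp 2 (x, 0) :=
  rfl

end LinearIsometry

namespace PMap

section Resolvent

variable {E : Type*} [NormedAddCommGroup E] [InnerProductSpace ℂ E] {T : PMap E E}

/-- The operator `T - z` as a linear map on the domain of `T`. -/
def subSmul (T : PMap E E) (z : ℂ) : T.dom →ₗ[ℂ] E where
  toFun x := T.toFun x - z • (x : E)
  map_add' x y := by
    simp only [Submodule.coe_add, T.map_add' x x.2 y y.2, smul_add]
    abel
  map_smul' c x := by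
    simp only [Submodule.coe_smul, T.map_smul' c x x.2, RingHom.id_apply, smul_sub, smul_comm z c]

theorem subSmul_apply (T : PMap E E) (z : ℂ) (x : T.dom) :
    T.subSmul z x = T.toFun x - z • (x : E) :=
  rfl

/-- `R` is the resolvent `(T - z)⁻¹`. -/
def IsResolventAt (T : PMap E E) (z : ℂ) (R : E →L[ℂ] E) : Prop :=
  (∀ x ∈ T.dom, R (T.toFun x - z • x) = x) ∧ ∀ y : E, R y ∈ T.dom ∧ T.toFun (R y) - z • R y = y

theorem mem_resolventSet_of_surjective {z : ℂ} {C : ℝ} (hsurj : Function.Surjective (T.subSmul z))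
    (hC : ∀ x : T.dom, ‖x‖ ≤ C * ‖T.subSmul z x‖) : z ∈ T.resolventSet := by
  have hinj : Function.Injective (T.subSmul z) := by
    refine (injective_iff_map_eq_zero _).2 fun x hx ↦ norm_le_zero_iff.1 ?_
    simpa only [hx, norm_zero, mul_zero] using hC x
  let e := LinearEquiv.ofBijective (T.subSmul z) ⟨hinj, hsurj⟩
  have he (y : E) : T.subSmul z (e.symm y) = y := e.apply_symm_apply y
  refine ⟨(T.dom.subtype ∘ₗ e.symm.toLinearMap).mkContinuous C fun y ↦ ?_,
    fun x hx ↦ ?_, fun y ↦ ?_⟩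
  · exact (hC (e.symm y)).trans_eq (by rw [he])
  · exact congrArg Subtype.val (e.symm_apply_apply ⟨x, hx⟩)
  · exact ⟨(e.symm y).2, he y⟩

theorem IsResolventAt.sub_eq_smul_mul {z w : ℂ} {R Q : E →L[ℂ] E} (hR : T.IsResolventAt z R)
    (hQ : T.IsResolventAt w Q) : R - Q = (z - w) • (R * Q) := by
  ext u
  have hshift : T.toFun (Q u) - z • Q u = u - (z - w) • Q u := by
    rw [sub_eq_iff_eq_add.1 (hQ.2 u).2]
    module
  have hRQ : R u - (z - w) • R (Q u) = Q u := by
    rw [← map_smul, ← map_sub, ← hshift, hR.1 _ (hQ.2 u).1]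
  change R u - Q u = (z - w) • R (Q u)
  rw [sub_eq_iff_eq_add.1 hRQ, add_sub_cancel_left]

theorem IsResolventAt.notMem_spectrum_of_add_inv_mem {z k : ℂ} {R : E →L[ℂ] E}
    (hR : T.IsResolventAt z R) (hk : k ≠ 0) (hzk : z + k⁻¹ ∈ T.resolventSet) :
    k ∉ spectrum ℂ R := by
  obtain ⟨Q, hQ : T.IsResolventAt (z + k⁻¹) Q⟩ := hzk
  have hQR : Q * R = k • (Q - R) := by
    rw [hQ.sub_eq_smul_mul hR, add_sub_cancel_left, smul_inv_smul₀ hk]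
  have hRQ : R * Q = k • (Q - R) := by
    rw [← neg_sub R Q, hR.sub_eq_smul_mul hQ, sub_add_cancel_left, neg_smul, neg_neg,
      smul_inv_smul₀ hk]
  rw [spectrum.notMem_iff, Algebra.algebraMap_eq_smul_one]
  refine isUnit_iff_exists.2 ⟨k⁻¹ • (1 + k⁻¹ • Q), ?_, ?_⟩
  · simp only [sub_mul, mul_add, smul_mul_assoc, mul_smul_comm, one_mul, mul_one, smul_add, hRQ]
    match_scalars <;> field_simp <;> ring
  · simp only [mul_sub, add_mul, smul_mul_assoc, mul_smul_comm, one_mul, mul_one, smul_add, hQR]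
    match_scalars <;> field_simp <;> ring

end Resolvent

section SelfAdjoint

variable {E : Type*} [NormedAddCommGroup E] [InnerProductSpace ℂ E] {T : PMap E E}

theorem IsSelfAdjoint.inner_toFun_left (hT : T.IsSelfAdjoint) {x y : E} (hx : x ∈ T.dom)
    (hy : y ∈ T.dom) : ⟪T.toFun x, y⟫ = ⟪x, T.toFun y⟫ :=
  (hT.2 y (T.toFun y)).2 ⟨hy, rfl⟩ x hx

theorem IsSelfAdjoint.mem_dom_of_tendsto (hT : T.IsSelfAdjoint) {ι : Type*} {l : Filter ι} [l.NeBot]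
    {u : ι → T.dom} {x y : E} (hx : Tendsto (fun i ↦ (u i : E)) l (𝓝 x))
    (hy : Tendsto (fun i ↦ T.toFun (u i)) l (𝓝 y)) : x ∈ T.dom ∧ y = T.toFun x := by
  refine (hT.2 x y).1 fun a ha ↦ tendsto_nhds_unique (tendsto_const_nhds.inner hx) ?_
  simpa only [hT.inner_toFun_left ha (u _).2] using tendsto_const_nhds.inner hy

theorem IsSelfAdjoint.orthogonal_range_subSmul (hT : T.IsSelfAdjoint) (t : ℝ) :
    (LinearMap.range (T.subSmul t))ᗮ = T.eigSp t := by
  ext y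
  have hadj : (∀ x ∈ T.dom, ⟪T.toFun x, y⟫ = ⟪x, (t : ℂ) • y⟫) ↔
      y ∈ (LinearMap.range (T.subSmul t))ᗮ := by
    simp only [Submodule.mem_orthogonal, LinearMap.mem_range, forall_exists_index,
      forall_apply_eq_imp_iff]
    simp only [Subtype.forall, subSmul_apply, inner_sub_left, inner_smul_left, Complex.conj_ofReal,
      inner_smul_right, sub_eq_zero]
  rw [← hadj, hT.2]
  exact and_congr_right fun _ ↦ eq_comm

theorem IsSelfAdjoint.isClosed_range_subSmul [CompleteSpace E] (hT : T.IsSelfAdjoint) {z : ℂ}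
    {C : ℝ} (hC : ∀ x : T.dom, ‖x‖ ≤ C * ‖T.subSmul z x‖) :
    IsClosed (LinearMap.range (T.subSmul z) : Set E) := by
  have hanti : AntilipschitzWith C.toNNReal (T.subSmul z) :=
    AddMonoidHomClass.antilipschitz_of_bound _ fun x ↦ (hC x).trans <| by
      gcongr
      exact Real.le_coe_toNNReal C
  refine isClosed_of_closure_subset fun y hy ↦ ?_
  have : (comap (T.subSmul z) (𝓝 y)).NeBot := 
    comap_neBot_iff_frequently.2 (mem_closure_iff_frequently.1 hy)
  have hcauchy : Cauchy (comap (T.subSmul z) (𝓝 y)) :=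
    (cauchy_nhds (a := y)).comap' hanti.comap_uniformity_le this
  obtain ⟨x, hx : Tendsto (fun u : T.dom ↦ (u : E)) _ (𝓝 x)⟩ :=
    CompleteSpace.complete (hcauchy.map uniformContinuous_subtype_val)
  have hTx : Tendsto (fun u : T.dom ↦ T.toFun u) (comap (T.subSmul z) (𝓝 y)) (𝓝 (y + z • x)) := by
    simpa only [subSmul_apply, sub_add_cancel] using tendsto_comap.add (hx.const_smul z)
  obtain ⟨hxdom, hTx_eq⟩ := hT.mem_dom_of_tendsto hx hTx
  exact ⟨⟨x, hxdom⟩, by rw [subSmul_apply, ← hTx_eq, add_sub_cancel_right]⟩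

theorem IsSelfAdjoint.mem_resolventSet_of_norm_le [CompleteSpace E] (hT : T.IsSelfAdjoint)
    {t C : ℝ} (hC : ∀ x ∈ T.dom, ‖x‖ ≤ C * ‖T.toFun x - (t : ℂ) • x‖) :
    (t : ℂ) ∈ T.resolventSet := by
  have hC' (x : T.dom) : ‖x‖ ≤ C * ‖T.subSmul t x‖ := hC x x.2
  have hclosed := hT.isClosed_range_subSmul hC'
  have : CompleteSpace (LinearMap.range (T.subSmul t)) := hclosed.completeSpace_coe
  have hker : T.eigSp t = ⊥ := by
    refine (Submodule.eq_bot_iff _).2 fun x hx ↦ norm_le_zero_iff.1 ?_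
    simpa only [hx.2, sub_self, norm_zero, mul_zero] using hC x hx.1
  have hrange : LinearMap.range (T.subSmul t) = ⊤ := by
    rw [← Submodule.orthogonal_eq_bot_iff, hT.orthogonal_range_subSmul, hker]
  exact mem_resolventSet_of_surjective (LinearMap.range_eq_top.1 hrange) hC'

theorem IsResolventAt.isSelfAdjoint [CompleteSpace E] {t : ℝ} {R : E →L[ℂ] E}
    (hR : T.IsResolventAt t R) (hT : T.IsSelfAdjoint) : _root_.IsSelfAdjoint R := by
  refine ContinuousLinearMap.isSelfAdjoint_iff_isSymmetric.2 fun u v ↦ ?_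
  obtain ⟨hu, hu_eq⟩ := hR.2 u
  obtain ⟨hv, hv_eq⟩ := hR.2 v
  calc ⟪R u, v⟫ = ⟪R u, T.toFun (R v) - (t : ℂ) • R v⟫ := by rw [hv_eq]
    _ = ⟪T.toFun (R u) - (t : ℂ) • R u, R v⟫ := by
      rw [inner_sub_right, inner_sub_left, hT.inner_toFun_left hu hv, inner_smul_left,
        inner_smul_right, Complex.conj_ofReal]
    _ = ⟪u, R v⟫ := by rw [hu_eq]

theorem IsResolventAt.norm_mul_lt_one_of_disjoint [CompleteSpace E] {m h : ℝ} {R : E →L[ℂ] E}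
    (hR : T.IsResolventAt m R) (hT : T.IsSelfAdjoint)
    (hdisj : Disjoint (Metric.closedBall m h) T.specR) : ‖R‖ * h < 1 := by
  obtain _ | _ := subsingleton_or_nontrivial E
  · simp [Subsingleton.elim R 0]
  have hspec {k : ℝ} (hk : k ∈ spectrum ℝ R) : |k| * h < 1 := by
    obtain rfl | hk0 := eq_or_ne k 0
    · simp
    have hout : m + k⁻¹ ∉ Metric.closedBall m h := by
      refine fun hmem ↦ hR.notMem_spectrum_of_add_inv_mem (k := k) (by exact_mod_cast hk0) ?_
        ((spectrum.algebraMap_mem_iff ℂ).2 hk)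
      simpa [specR, spec] using hdisj.notMem_of_mem_left hmem
    have hlt : h < |k|⁻¹ := by simpa [Real.dist_eq, abs_inv] using hout
    calc |k| * h < |k| * |k|⁻¹ := by gcongr
      _ = 1 := mul_inv_cancel₀ (abs_ne_zero.2 hk0)
  obtain hnorm | hnorm := CStarAlgebra.norm_or_neg_norm_mem_spectrum (hR.isSelfAdjoint hT)
  · simpa only [abs_norm] using hspec hnorm
  · simpa only [abs_neg, abs_norm] using hspec hnorm

theorem IsSelfAdjoint.disjoint_closedBall_specR_iff [CompleteSpace E] (hT : T.IsSelfAdjoint)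
    {m h : ℝ} (hh : 0 ≤ h) :
    Disjoint (Metric.closedBall m h) T.specR ↔
      ∃ C : ℝ, 0 ≤ C ∧ C * h < 1 ∧ ∀ x ∈ T.dom, ‖x‖ ≤ C * ‖T.toFun x - (m : ℂ) • x‖ := by
  constructor
  · intro hdisj
    obtain ⟨R, hR : T.IsResolventAt m R⟩ : (m : ℂ) ∈ T.resolventSet := by
      simpa [specR, spec] using hdisj.notMem_of_mem_left (Metric.mem_closedBall_self hh)
    refine ⟨‖R‖, norm_nonneg R, hR.norm_mul_lt_one_of_disjoint hT hdisj, fun x hx ↦ ?_⟩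
    simpa only [hR.1 x hx] using R.le_opNorm (T.toFun x - (m : ℂ) • x)
  · rintro ⟨C, hC0, hCh, hC⟩
    refine Set.disjoint_left.2 fun s hs hspec ↦ hspec ?_
    refine hT.mem_resolventSet_of_norm_le (C := C / (1 - C * h)) fun x hx ↦ ?_
    have hsm : ‖((s - m : ℝ) : ℂ) • x‖ ≤ h * ‖x‖ := by
      rw [norm_smul, Complex.norm_real, ← dist_eq_norm]
      gcongr
      exact hs
    have hbound : ‖x‖ ≤ C * (‖T.toFun x - (s : ℂ) • x‖ + h * ‖x‖) :=
      calc ‖x‖ ≤ C * ‖T.toFun x - (m : ℂ) • x‖ := hC x hx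
        _ = C * ‖(T.toFun x - (s : ℂ) • x) + ((s - m : ℝ) : ℂ) • x‖ := by
          push_cast
          congr 2
          module
        _ ≤ C * (‖T.toFun x - (s : ℂ) • x‖ + h * ‖x‖) := by
          gcongr
          exact (norm_add_le _ _).trans (by gcongr)
    rw [div_mul_eq_mul_div, le_div_iff₀ (sub_pos.2 hCh)]
    linarith

end SelfAdjoint

section SchurComplement

variable {H E : Type*} [NormedAddCommGroup H] [InnerProductSpace ℂ H]
  [NormedAddCommGroup E] [InnerProductSpace ℂ E]
  {S : PMap H H} {T : PMap E E} {J : H →ₗᵢ[ℂ] E} {μ m C : ℝ}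

/-- `S` is (a restriction of) the Schur complement of `T - μ` with respect to the subspace embedded
by `J`: every `x` in the domain of `S` is the component along `J` (that is, `J* v`) of some `v` with
`(T - μ) v = J (S x)`. -/
def IsSchurComplementAt (S : PMap H H) (T : PMap E E) (J : H →ₗᵢ[ℂ] E) (μ : ℝ) : Prop :=
  ∀ x ∈ S.dom, ∃ v ∈ T.dom, (∀ u, ⟪J u, v⟫ = ⟪u, x⟫) ∧ T.toFun v - (μ : ℂ) • v = J (S.toFun x)

theorem IsSchurComplementAt.norm_le_of_forall_norm_le (hS : S.IsSchurComplementAt T J μ)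
    (hC0 : 0 ≤ C) (hCμ : C * |μ - m| ≤ 1)
    (hC : ∀ v ∈ T.dom, ‖v‖ ≤ C * ‖T.toFun v - (m : ℂ) • v‖) {x : H} (hx : x ∈ S.dom) :
    ‖x‖ ≤ C * ‖S.toFun x - ((m - μ : ℝ) : ℂ) • x‖ := by
  obtain ⟨v, hv, hJv, hTv⟩ := hS x hx
  have hTm : T.toFun v - (m : ℂ) • v = J (S.toFun x) + ((μ - m : ℝ) : ℂ) • v := by
    rw [← hTv]
    push_cast
    module
  have hSm : S.toFun x - ((m - μ : ℝ) : ℂ) • x = S.toFun x + ((μ - m : ℝ) : ℂ) • x := by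
    push_cast
    module
  have hCμ_sq : (C * (μ - m)) ^ 2 ≤ 1 := by
    rwa [sq_le_one_iff_abs_le_one, abs_mul, abs_of_nonneg hC0]
  have hxv : ‖x‖ ^ 2 ≤ ‖v‖ ^ 2 := by
    gcongr
    exact norm_le_of_inner_map_eq hJv
  have hvT : ‖v‖ ^ 2 ≤ C ^ 2 * ‖T.toFun v - (m : ℂ) • v‖ ^ 2 := by
    rw [← mul_pow]
    gcongr
    exact hC v hv
  rw [hTm, norm_map_add_smul_sq hJv, ← hSm] at hvT
  refine le_of_sq_le_sq ?_ (by positivity)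
  calc ‖x‖ ^ 2 = ‖v‖ ^ 2 - (‖v‖ ^ 2 - ‖x‖ ^ 2) := (sub_sub_cancel _ _).symm
    _ ≤ C ^ 2 * (‖S.toFun x - ((m - μ : ℝ) : ℂ) • x‖ ^ 2 + (μ - m) ^ 2 * (‖v‖ ^ 2 - ‖x‖ ^ 2))
        - (C * (μ - m)) ^ 2 * (‖v‖ ^ 2 - ‖x‖ ^ 2) :=
      sub_le_sub hvT (mul_le_of_le_one_left (sub_nonneg.2 hxv) hCμ_sq)
    _ = (C * ‖S.toFun x - ((m - μ : ℝ) : ℂ) • x‖) ^ 2 := by ring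

theorem IsSchurComplementAt.disjoint_closedBall_specR [CompleteSpace H] [CompleteSpace E]
    (hS : S.IsSchurComplementAt T J μ) (hSsa : S.IsSelfAdjoint) (hTsa : T.IsSelfAdjoint) {h : ℝ}
    (hμ : μ ∈ Metric.closedBall m h) (hT : Disjoint (Metric.closedBall m h) T.specR) :
    Disjoint (Metric.closedBall (m - μ) h) S.specR := by
  have hh : 0 ≤ h := dist_nonneg.trans hμ
  obtain ⟨C, hC0, hCh, hC⟩ := (hTsa.disjoint_closedBall_specR_iff hh).1 hT
  have hCμ : C * |μ - m| ≤ 1 := (mul_le_mul_of_nonneg_left hμ hC0).trans hCh.le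
  exact (hSsa.disjoint_closedBall_specR_iff hh).2
    ⟨C, hC0, hCh, fun _ ↦ hS.norm_le_of_forall_norm_le hC0 hCμ hC⟩

theorem IsSchurComplementAt.inter_specR_nonempty [CompleteSpace H] [CompleteSpace E]
    (hS : S.IsSchurComplementAt T J μ) (hSsa : S.IsSelfAdjoint) (hTsa : T.IsSelfAdjoint) {a b : ℝ}
    (hμ : μ ∈ Set.Icc a b) (hne : (Set.Icc (a - μ) (b - μ) ∩ S.specR).Nonempty) :
    (Set.Icc a b ∩ T.specR).Nonempty := by
  contrapose! hne
  rw [← Set.disjoint_iff_inter_eq_empty] at hne ⊢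
  have hball : Set.Icc (a - μ) (b - μ) = Metric.closedBall ((a + b) / 2 - μ) ((b - a) / 2) := by
    rw [Real.Icc_eq_closedBall]
    congr 1 <;> ring
  rw [Real.Icc_eq_closedBall] at hne hμ
  exact hball ▸ hS.disjoint_closedBall_specR hSsa hTsa hμ hne

end SchurComplement

section BlockOperator

variable {H1 H2 : Type*} [NormedAddCommGroup H1] [InnerProductSpace ℂ H1]
  [NormedAddCommGroup H2] [InnerProductSpace ℂ H2]

theorem isSchurComplementAt_hilbertSumInl {A : PMap H1 H1} {D : PMap H2 H2} {Bs : PMap H1 H2}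
    {Fa : Submodule ℂ H1} (hFaBs : (Fa : Set H1) ⊆ (Bs.dom : Set H1)) {ν : ℂ} {μ : ℝ}
    {G : H2 →L[ℂ] H1} {R : H2 →L[ℂ] H2} (hR : D.IsResolventAt μ R)
    {M : PMap (WithLp 2 (H1 × H2)) (WithLp 2 (H1 × H2))}
    (hMdom : ∀ x y, y ∈ D.dom → x + G y ∈ A.dom → WithLp.toLp 2 (x, y) ∈ M.dom)
    (hMact : ∀ x y, WithLp.toLp 2 (x, y) ∈ M.dom → x ∈ Bs.dom →
      M.toFun (WithLp.toLp 2 (x, y)) =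
        WithLp.toLp 2 (A.toFun (x + G y) - ν • G y, Bs.toFun x + D.toFun y))
    {S : PMap H1 H1} (hSdom : ∀ x ∈ S.dom, x ∈ Fa ∧ x - G (R (Bs.toFun x)) ∈ A.dom)
    (hSact : ∀ x ∈ S.dom, S.toFun x = A.toFun (x - G (R (Bs.toFun x)))
      - ν • (x - G (R (Bs.toFun x))) + (ν - μ) • x) :
    S.IsSchurComplementAt M (hilbertSumInl H1 H2) μ := by
  intro x hx
  obtain ⟨hxF, hxA⟩ := hSdom x hx
  set y := R (Bs.toFun x)
  obtain ⟨hyD, hDy⟩ : y ∈ D.dom ∧ D.toFun y - (μ : ℂ) • y = Bs.toFun x := hR.2 _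
  have hD_neg : D.toFun (-y) = -D.toFun y := by simpa using D.map_smul' (-1) y hyD
  have hG_neg : x + G (-y) = x - G y := by rw [map_neg, sub_eq_add_neg]
  have hmem : WithLp.toLp 2 (x, -y) ∈ M.dom :=
    hMdom x (-y) (D.dom.neg_mem hyD) (hG_neg.symm ▸ hxA)
  refine ⟨WithLp.toLp 2 (x, -y), hmem, fun u ↦ ?_, ?_⟩
  · simp [hilbertSumInl_apply, WithLp.prod_inner_apply]
  · rw [hMact x (-y) hmem (hFaBs hxF), hG_neg, hD_neg, ← WithLp.toLp_smul, ← WithLp.toLp_sub,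
      hilbertSumInl_apply]
    refine congrArg (WithLp.toLp 2) (Prod.ext ?_ ?_)
    · change A.toFun (x - G y) - ν • G (-y) - (μ : ℂ) • x = S.toFun x
      rw [hSact x hx, map_neg]
      module
    · change Bs.toFun x + -D.toFun y - (μ : ℂ) • -y = 0
      rw [← hDy]
      module

end BlockOperator

end PMap

theorem statement11_general
    {H1 : Type*} [NormedAddCommGroup H1] [InnerProductSpace ℂ H1] [CompleteSpace H1]
    {H2 : Type*} [NormedAddCommGroup H2] [InnerProductSpace ℂ H2] [CompleteSpace H2]
    (A : PMap H1 H1) (D : PMap H2 H2) (Bs : PMap H1 H2) (Fa : Submodule ℂ H1)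
    (hFaBs : (Fa : Set H1) ⊆ (Bs.dom : Set H1)) (ν : ℂ) (G : H2 →L[ℂ] H1)
    (M : PMap (WithLp 2 (H1 × H2)) (WithLp 2 (H1 × H2))) (hM : M.IsSelfAdjoint)
    (hMdom : ∀ x y, WithLp.toLp 2 (x, y) ∈ M.dom ↔ y ∈ D.dom ∧ x + G y ∈ A.dom)
    (hMact : ∀ x y, WithLp.toLp 2 (x, y) ∈ M.dom → x ∈ Bs.dom →
      M.toFun (WithLp.toLp 2 (x, y)) =
        WithLp.toLp 2 (A.toFun (x + G y) - ν • G y, Bs.toFun x + D.toFun y))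
    (μ : ℝ) (R : H2 →L[ℂ] H2) (hR : D.IsResolventAt μ R)
    (S : PMap H1 H1) (hS : S.IsSelfAdjoint)
    (hSdom : ∀ x, x ∈ S.dom ↔ x ∈ Fa ∧ x - G (R (Bs.toFun x)) ∈ A.dom)
    (hSact : ∀ x ∈ S.dom, S.toFun x = A.toFun (x - G (R (Bs.toFun x)))
      - ν • (x - G (R (Bs.toFun x))) + (ν - μ) • x)
    (a b : ℝ) (hμ : μ ∈ Set.Icc a b) (hSspec : (Set.Icc (a - μ) (b - μ) ∩ S.specR).Nonempty) :
    (Set.Icc a b ∩ M.specR).Nonempty :=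
  (PMap.isSchurComplementAt_hilbertSumInl hFaBs hR (fun x y hy hxy ↦ (hMdom x y).2 ⟨hy, hxy⟩) hMact
    (fun x ↦ (hSdom x).1) hSact).inter_specR_nonempty hS hM hμ hSspec

/-- Lemma 4.5 of the paper.  For a top-dominant block operator matrix
with self-adjoint closure `M`, `d = max Spec D`, `λ_e = inf (Spec_ess M ∩ (d,∞))` and
Schur complement `S(μ)`: if `μ ∈ (d, λ_e)`, `0 < ε < μ − d` and
`[−ε, 0] ∩ Spec (S μ) ≠ ∅`, then `[μ − ε, μ] ∩ Spec M ≠ ∅`. -/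
theorem statement11
    {H1 : Type*} [NormedAddCommGroup H1] [InnerProductSpace ℂ H1] [CompleteSpace H1]
    {H2 : Type*} [NormedAddCommGroup H2] [InnerProductSpace ℂ H2] [CompleteSpace H2]
    -- (i) `A` and `D` are self-adjoint on `H1` and `H2` respectively
    (A : PMap H1 H1) (hA : A.IsSelfAdjoint)
    (D : PMap H2 H2) (hD : D.IsSelfAdjoint)
    -- (ii) `A` bounded below, `D` bounded above with `d = max Spec D`,
    -- `B` closed and densely defined from `H2` to `H1`
    (hAbelow : ∃ c : ℝ, ∀ x ∈ A.dom, c * ‖x‖ ^ 2 ≤ (⟪A.toFun x, x⟫ : ℂ).re)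
    (d : ℝ) (hd : IsGreatest D.specR d)
    (hDabove : ∀ y ∈ D.dom, (⟪D.toFun y, y⟫ : ℂ).re ≤ d * ‖y‖ ^ 2)
    (B : PMap H2 H1)
    (hBclosed : IsClosed {p : H2 × H1 | p.1 ∈ B.dom ∧ p.2 = B.toFun p.1})
    (hBdense : Dense (B.dom : Set H2))
    -- `Bs` is the adjoint `B*` of `B`
    (Bs : PMap H1 H2)
    (hBs : (∀ y : H1, y ∈ Bs.dom ↔ ∃ z : H2, ∀ x ∈ B.dom, ⟪B.toFun x, y⟫ = ⟪x, z⟫) ∧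
      ∀ x ∈ B.dom, ∀ y ∈ Bs.dom, ⟪B.toFun x, y⟫ = ⟪x, Bs.toFun y⟫)
    -- `Fa = Dom(|A|^{1/2}) = Dom(𝔞)`, the domain of the closed form `fa = 𝔞` of `A`
    (Fa : Submodule ℂ H1) (fa : H1 → H1 → ℂ)
    (hAdomFa : (A.dom : Set H1) ⊆ Fa)
    (hfaHerm : ∀ x ∈ Fa, ∀ y ∈ Fa, fa x y = starRingEnd ℂ (fa y x))
    (hfaA : ∀ x ∈ A.dom, ∀ y ∈ Fa, fa x y = ⟪A.toFun x, y⟫)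
    -- (iii) `Dom(|A|^{1/2}) ⊆ Dom(B*)`, `Dom(B) ⊆ Dom(D)`, and `Dom(B)` is a core for `D`
    (hFaBs : (Fa : Set H1) ⊆ (Bs.dom : Set H1))
    (hBD : B.dom ≤ D.dom)
    (hBcore : ∀ y ∈ D.dom, ∀ δ : ℝ, 0 < δ →
      ∃ z ∈ B.dom, ‖z - y‖ < δ ∧ ‖D.toFun z - D.toFun y‖ < δ)
    -- `ν < min Spec A`, with `RA = (A − ν)⁻¹` and `G = cl((A − ν)⁻¹ B)` bounded,
    -- and `RD z = (D − z)⁻¹` for `Re z > d`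
    (ν : ℝ) (hν : ∃ c : ℝ, ν < c ∧ ∀ x ∈ A.dom, c * ‖x‖ ^ 2 ≤ (⟪A.toFun x, x⟫ : ℂ).re)
    (RA : H1 →L[ℂ] H1)
    (hRA : (∀ x ∈ A.dom, RA (A.toFun x - (ν : ℂ) • x) = x) ∧
      ∀ y : H1, RA y ∈ A.dom ∧ A.toFun (RA y) - (ν : ℂ) • RA y = y)
    (G : H2 →L[ℂ] H1) (hG : ∀ y ∈ B.dom, G y = RA (B.toFun y))
    (RD : ℂ → (H2 →L[ℂ] H2))
    (hRD : ∀ z : ℂ, d < z.re →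
      (∀ y ∈ D.dom, RD z (D.toFun y - z • y) = y) ∧
      ∀ w : H2, RD z w ∈ D.dom ∧ D.toFun (RD z w) - z • RD z w = w)
    -- `M` is the self-adjoint closure of `M₀`
    (M : PMap (WithLp 2 (H1 × H2)) (WithLp 2 (H1 × H2))) (hM : M.IsSelfAdjoint)
    (hMdom : ∀ (x : H1) (y : H2),
      (WithLp.equiv 2 (H1 × H2)).symm (x, y) ∈ M.dom ↔ y ∈ D.dom ∧ x + G y ∈ A.dom)
    (hMact : ∀ (x : H1) (y : H2),
      (WithLp.equiv 2 (H1 × H2)).symm (x, y) ∈ M.dom → x ∈ Bs.dom →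
      M.toFun ((WithLp.equiv 2 (H1 × H2)).symm (x, y)) =
        (WithLp.equiv 2 (H1 × H2)).symm
          (A.toFun (x + G y) - (ν : ℂ) • G y, Bs.toFun x + D.toFun y))
    -- the Schur complement `S μ` for real `μ > d`
    (S : ℝ → PMap H1 H1)
    (hSsa : ∀ μ : ℝ, d < μ → (S μ).IsSelfAdjoint)
    (hSdom : ∀ μ : ℝ, d < μ → ∀ x : H1,
      x ∈ (S μ).dom ↔ x ∈ Fa ∧ x - G (RD (μ : ℂ) (Bs.toFun x)) ∈ A.dom)
    (hSact : ∀ μ : ℝ, d < μ → ∀ x ∈ (S μ).dom,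
      (S μ).toFun x = A.toFun (x - G (RD (μ : ℂ) (Bs.toFun x)))
        - (ν : ℂ) • (x - G (RD (μ : ℂ) (Bs.toFun x))) + ((ν : ℂ) - (μ : ℂ)) • x)
    -- `lamE`: the interval `(d, lamE)` lies below the essential spectrum of `M`
    -- (`lamE = inf (Spec_ess M ∩ (d, ∞))`)
    (lamE : ℝ) (hlamE : ∀ t ∈ M.specEssR, d < t → lamE ≤ t)
    -- it is assumed that `κ(μ') < ∞` for some `μ' > d` (variational characterization of
    -- the total multiplicity of the negative spectrum of `S(μ')`)
    (hκfin : ∃ μ' : ℝ, d < μ' ∧ ∃ k : ℕ, ∀ V : Submodule ℂ H1, (V : Set H1) ⊆ Fa →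
      (∀ u ∈ V, u ≠ 0 → (schurForm fa Bs RD (μ' : ℂ) u u).re < 0) →
      Module.finrank ℂ V ≤ k)
    (μ ε : ℝ) (hμ : μ ∈ Set.Ioo d lamE) (hε : 0 < ε) (hεμ : ε < μ - d)
    (hSspec : (Set.Icc (-ε) 0 ∩ (S μ).specR).Nonempty) :
    (Set.Icc (μ - ε) μ ∩ M.specR).Nonempty :=
  statement11_general A D Bs Fa hFaBs ν G M hM hMdom hMact μ (RD μ)
    (hRD μ (by simpa using hμ.1)) (S μ) (hSsa μ hμ.1) (hSdom μ hμ.1) (hSact μ hμ.1) (μ - ε) μ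
    ⟨by linarith, le_rfl⟩ (by simpa using hSspec)
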